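/- Let Ω ⊂ ℝ^N (N ≥ 3) be a bounded open set with C² boundary and δ(x) := dist(x, ∂Ω). For every a ≥ 1 and every α > 1/2 there exist constants c > 0 and β₀ > 0 such that for every β ∈ (0,β₀) and every y ∈ ℝ^N: ∫_{Σ_β ∩ {x : |x−y| ≥ aβ}} |x−y|^{2−N−2α} dH^{N−1}(x) ≤ c β^{1−2α}. -/

import Mathlib

open MeasureTheory Metric Set

/-- `Ω` has `C²` boundary: near each boundary point, `Ω` coincides with the strict
sublevel set of a `C²` function with nonvanishing derivative. -/
def HasC2Boundary {N : ℕ} (Ω : Set (EuclideanSpace ℝ (Fin N))) : Prop :=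
  ∀ p ∈ frontier Ω, ∃ (U : Set (EuclideanSpace ℝ (Fin N)))
    (f : EuclideanSpace ℝ (Fin N) → ℝ),
    IsOpen U ∧ p ∈ U ∧ ContDiffOn ℝ 2 f U ∧ (∀ x ∈ U, fderiv ℝ f x ≠ 0) ∧
    Ω ∩ U = {x ∈ U | f x < 0}

/-
Near a boundary point, a Lipschitz domain `Ω` is stable under translation by a fixed open cone `K`.
If two points `x`, `x'` of `Σ_β` differed by `x' - x ∈ K`, then translating a boundary point `z`
nearest to `x'` by `x - x'` would give a point at distance `β` from `x`, hence in the closure of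
`Ω`, and adding the vector `x' - x ∈ K` back would show that `z` is interior. So the chords of `Σ_β`
avoid `± K`, and `Σ_β` is locally a Lipschitz graph over a fixed hyperplane, with constants
independent of `β`. Therefore `H^{N-1}(Σ_β ∩ B(y, r)) ≤ C r^{N-1}`, and summing over dyadic shells
around `y` gives the decay of the integral. A `C²` boundary is Lipschitz because a function with
nonzero strict derivative decreases along a cone of directions.
-/

open Filter Module
open scoped NNReal ENNReal Topology RealInnerProductSpace

section UpperAhlforsRegular

variable {X : Type*} [PseudoMetricSpace X]

lemma compl_ball_subset_iUnion_shell (y : X) {t : ℝ} (ht : 0 < t) :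
    (ball y t)ᶜ ⊆ ⋃ k : ℕ, ball y (2 * (2 ^ k * t)) \ ball y (2 ^ k * t) := by
  intro x hx
  obtain ⟨k, hk, hk'⟩ := exists_nat_pow_near ((one_le_div ht).2 (not_lt.1 hx)) one_lt_two
  rw [le_div_iff₀ ht] at hk
  rw [div_lt_iff₀ ht, pow_succ', mul_assoc] at hk'
  exact mem_iUnion.2 ⟨k, hk', not_lt.2 hk⟩

variable [MeasurableSpace X]

/-- Upper Ahlfors regularity of dimension `d` with constant `C`: every ball of radius `r` has
measure at most `C * r ^ d`. The centers are not required to lie in the support of `μ`. -/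
def IsUpperAhlforsRegular (μ : Measure X) (C : ℝ≥0) (d : ℝ) : Prop :=
  ∀ (y : X) (r : ℝ), 0 < r → μ (ball y r) ≤ C * ENNReal.ofReal (r ^ d)

namespace IsUpperAhlforsRegular

variable {μ ν : Measure X} {C D : ℝ≥0} {d s : ℝ}

lemma mono (hν : IsUpperAhlforsRegular ν C d) (h : μ ≤ ν) : IsUpperAhlforsRegular μ C d :=
  fun y r hr => (h _).trans (hν y r hr)

lemma add (hμ : IsUpperAhlforsRegular μ C d) (hν : IsUpperAhlforsRegular ν D d) :
    IsUpperAhlforsRegular (μ + ν) (C + D) d := by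
  intro y r hr
  rw [Measure.add_apply, ENNReal.coe_add, add_mul]
  exact add_le_add (hμ y r hr) (hν y r hr)

lemma restrict_union {A B : Set X} (hA : IsUpperAhlforsRegular (μ.restrict A) C d)
    (hB : IsUpperAhlforsRegular (μ.restrict B) D d) :
    IsUpperAhlforsRegular (μ.restrict (A ∪ B)) (C + D) d :=
  (hA.add hB).mono (Measure.restrict_union_le A B)

variable [OpensMeasurableSpace X]

lemma setLIntegral_shell_le (hμ : IsUpperAhlforsRegular μ C d) (hs : 0 ≤ s) (y : X) {r : ℝ}
    (hr : 0 < r) :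
    ∫⁻ x in ball y (2 * r) \ ball y r, ENNReal.ofReal (dist x y ^ (-s)) ∂μ ≤
      ENNReal.ofReal (C * 2 ^ d * r ^ (d - s)) :=
  calc ∫⁻ x in ball y (2 * r) \ ball y r, ENNReal.ofReal (dist x y ^ (-s)) ∂μ
      ≤ ∫⁻ _ in ball y (2 * r) \ ball y r, ENNReal.ofReal (r ^ (-s)) ∂μ := by
        refine setLIntegral_mono' (measurableSet_ball.diff measurableSet_ball) fun x hx =>
          ENNReal.ofReal_le_ofReal ?_
        exact Real.rpow_le_rpow_of_nonpos hr (not_lt.1 hx.2) (neg_nonpos.2 hs)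
    _ = ENNReal.ofReal (r ^ (-s)) * μ (ball y (2 * r) \ ball y r) := setLIntegral_const _ _
    _ ≤ ENNReal.ofReal (r ^ (-s)) * (C * ENNReal.ofReal ((2 * r) ^ d)) := by
        gcongr
        exact (measure_mono sdiff_subset).trans (hμ y _ (by positivity))
    _ = ENNReal.ofReal (C * 2 ^ d * r ^ (d - s)) := by
        rw [← ENNReal.ofReal_coe_nnreal, ← ENNReal.ofReal_mul (by positivity),
          ← ENNReal.ofReal_mul (by positivity), Real.mul_rpow zero_le_two hr.le,
          sub_eq_add_neg, Real.rpow_add hr]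
        congr 1
        ring

lemma setLIntegral_compl_ball_le (hμ : IsUpperAhlforsRegular μ C d) (hs : 0 ≤ s) (hds : d < s)
    (y : X) {t : ℝ} (ht : 0 < t) :
    ∫⁻ x in (ball y t)ᶜ, ENNReal.ofReal (dist x y ^ (-s)) ∂μ ≤
      ENNReal.ofReal (C * 2 ^ d * (1 - 2 ^ (d - s))⁻¹ * t ^ (d - s)) := by
  have hratio : (2 : ℝ) ^ (d - s) < 1 :=
    Real.rpow_lt_one_of_one_lt_of_neg one_lt_two (sub_neg.2 hds)
  have hshell (k : ℕ) : C * 2 ^ d * (2 ^ k * t) ^ (d - s) =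
      C * 2 ^ d * t ^ (d - s) * (2 ^ (d - s)) ^ k := by
    rw [Real.mul_rpow (by positivity) ht.le, Real.rpow_pow_comm zero_le_two]
    ring
  calc ∫⁻ x in (ball y t)ᶜ, ENNReal.ofReal (dist x y ^ (-s)) ∂μ
      ≤ ∫⁻ x in ⋃ k : ℕ, ball y (2 * (2 ^ k * t)) \ ball y (2 ^ k * t),
          ENNReal.ofReal (dist x y ^ (-s)) ∂μ :=
        lintegral_mono_set (compl_ball_subset_iUnion_shell y ht)
    _ ≤ ∑' k : ℕ, ∫⁻ x in ball y (2 * (2 ^ k * t)) \ ball y (2 ^ k * t),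
          ENNReal.ofReal (dist x y ^ (-s)) ∂μ := lintegral_iUnion_le _ _
    _ ≤ ∑' k : ℕ, ENNReal.ofReal (C * 2 ^ d * t ^ (d - s) * (2 ^ (d - s)) ^ k) :=
        ENNReal.tsum_le_tsum fun k =>
          (hμ.setLIntegral_shell_le hs y (by positivity)).trans_eq (by rw [hshell])
    _ = ENNReal.ofReal (∑' k : ℕ, C * 2 ^ d * t ^ (d - s) * (2 ^ (d - s)) ^ k) :=
        (ENNReal.ofReal_tsum_of_nonneg (fun k => by positivity)
          ((summable_geometric_of_lt_one (by positivity) hratio).mul_left _)).symm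
    _ = ENNReal.ofReal (C * 2 ^ d * (1 - 2 ^ (d - s))⁻¹ * t ^ (d - s)) := by
        rw [tsum_mul_left, tsum_geometric_of_lt_one (by positivity) hratio, mul_right_comm]

end IsUpperAhlforsRegular

lemma exists_isUpperAhlforsRegular_restrict_of_isCompact {ι : Type*} {l : Filter ι} {μ : Measure X}
    {d : ℝ} {A : ι → Set X} {S : Set X} (hS : IsCompact S)
    (h : ∀ p ∈ S, ∃ U ∈ 𝓝 p, ∃ C, ∀ᶠ i in l, IsUpperAhlforsRegular (μ.restrict (A i ∩ U)) C d) :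
    ∃ U ∈ 𝓝ˢ S, ∃ C, ∀ᶠ i in l, IsUpperAhlforsRegular (μ.restrict (A i ∩ U)) C d := by
  refine hS.induction_on (p := fun T => ∃ U ∈ 𝓝ˢ T, ∃ C, ∀ᶠ i in l,
    IsUpperAhlforsRegular (μ.restrict (A i ∩ U)) C d) ?_ ?_ ?_ fun p hp => ?_
  · exact ⟨∅, by simp, 0, Eventually.of_forall fun i y r _ => by simp⟩
  · rintro T T' hT ⟨U, hU, hreg⟩
    exact ⟨U, nhdsSet_mono hT hU, hreg⟩
  · rintro T T' ⟨U, hU, C, hC⟩ ⟨U', hU', C', hC'⟩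
    refine ⟨U ∪ U', union_mem_nhdsSet hU hU', C + C', ?_⟩
    filter_upwards [hC, hC'] with i hi hi'
    rw [inter_union_distrib_left]
    exact hi.restrict_union hi'
  · obtain ⟨U, hU, hreg⟩ := h p hp
    exact ⟨interior U, mem_nhdsWithin_of_mem_nhds (interior_mem_nhds.2 hU), U,
      subset_interior_iff_mem_nhdsSet.1 Subset.rfl, hreg⟩

end UpperAhlforsRegular

lemma isUpperAhlforsRegular_hausdorffMeasure_restrict {X F : Type*} [MetricSpace X]
    [MeasurableSpace X] [BorelSpace X] [NormedAddCommGroup F] [NormedSpace ℝ F]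
    [FiniteDimensional ℝ F] [MeasurableSpace F] [BorelSpace F] {f : X → F} {A : Set X} {K L : ℝ≥0}
    (hA : AntilipschitzWith K (A.domRestrict f)) (hf : LipschitzWith L f) (hL : L ≠ 0) :
    IsUpperAhlforsRegular ((μH[finrank ℝ F] : Measure X).restrict A)
      ((K * L) ^ finrank ℝ F * (μH[finrank ℝ F] (ball (0 : F) 1)).toNNReal) (finrank ℝ F) := by
  intro y r hr
  set n := finrank ℝ F
  have himage : A.domRestrict f '' (Subtype.val ⁻¹' ball y r) ⊆ ball (f y) (L * r) := by
    rintro _ ⟨x, hx, rfl⟩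
    exact hf.mapsTo_ball hL y r hx
  calc (μH[n] : Measure X).restrict A (ball y r)
      = μH[n] (Subtype.val '' ((Subtype.val : A → X) ⁻¹' ball y r)) := by
        rw [Measure.restrict_apply measurableSet_ball, Subtype.image_preimage_coe, inter_comm]
    _ = μH[n] ((Subtype.val : A → X) ⁻¹' ball y r) :=
        isometry_subtype_coe.hausdorffMeasure_image (Or.inl n.cast_nonneg) _
    _ ≤ (K : ℝ≥0∞) ^ (n : ℝ) * μH[n] (A.domRestrict f '' (Subtype.val ⁻¹' ball y r)) :=
        hA.le_hausdorffMeasure_image n.cast_nonneg _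
    _ ≤ (K : ℝ≥0∞) ^ (n : ℝ) * μH[n] (ball (f y) (L * r)) := by gcongr
    _ = ((K * L) ^ n * (μH[n] (ball (0 : F) 1)).toNNReal : ℝ≥0) * ENNReal.ofReal (r ^ (n : ℝ)) := by
        have hball : (μH[n] : Measure F) (ball 0 1) ≠ ∞ := measure_ball_lt_top.ne
        rw [Measure.addHaar_ball_of_pos _ _ (by positivity), mul_pow,
          ENNReal.ofReal_mul (by positivity), ENNReal.ofReal_pow L.coe_nonneg]
        push_cast
        rw [ENNReal.coe_toNNReal hball, ENNReal.rpow_natCast, Real.rpow_natCast,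
          ENNReal.ofReal_coe_nnreal]
        ring

section Cone

variable {E : Type*} [NormedAddCommGroup E] [InnerProductSpace ℝ E]

/-- The open circular cone with axis `e` and half-angle `arccos (1 / ‖e‖)`. The length of `e`
encodes the opening of the cone, which is nonempty if and only if `1 < ‖e‖`. -/
def openCone (e : E) : Set E := {v | ‖v‖ < ⟪e, v⟫}

lemma isOpen_openCone (e : E) : IsOpen (openCone e) :=
  isOpen_lt continuous_norm (by fun_prop)

lemma abs_inner_le_norm_of_notMem_openCone {e v : E} (hv : v ∉ openCone e)
    (hv' : -v ∉ openCone e) : |⟪e, v⟫| ≤ ‖v‖ := by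
  simp only [openCone, mem_ofPred_eq, norm_neg, inner_neg_right, not_lt] at hv hv'
  exact abs_le.2 ⟨by linarith, hv⟩

lemma norm_sq_mul_norm_sq_eq_inner_sq_add (e v : E) :
    ‖e‖ ^ 2 * ‖v‖ ^ 2 =
      ⟪e, v⟫ ^ 2 + ‖e‖ ^ 2 * ‖(ℝ ∙ e)ᗮ.orthogonalProjectionOnto v‖ ^ 2 := by
  obtain rfl | he := eq_or_ne e 0
  · simp
  have hproj : ‖e‖ ^ 2 * ‖(ℝ ∙ e).starProjection v‖ ^ 2 = ⟪e, v⟫ ^ 2 := by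
    rw [Submodule.starProjection_singleton, norm_smul, Real.norm_eq_abs, mul_pow, sq_abs]
    have := norm_ne_zero_iff.2 he
    simp only [RCLike.ofReal_real_eq_id, id]
    field_simp
  rw [Submodule.norm_sq_eq_add_norm_sq_projection v (ℝ ∙ e), mul_add, ← hproj,
    Submodule.starProjection_apply, Submodule.coe_norm]

lemma sqrt_mul_norm_le_of_abs_inner_le_norm {e v : E} (h : |⟪e, v⟫| ≤ ‖v‖) :
    √(‖e‖ ^ 2 - 1) * ‖v‖ ≤ ‖e‖ * ‖(ℝ ∙ e)ᗮ.orthogonalProjectionOnto v‖ := by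
  rw [← Real.sqrt_sq (norm_nonneg v), ← Real.sqrt_mul' _ (by positivity)]
  refine Real.sqrt_le_iff.2 ⟨by positivity, ?_⟩
  have hsq : ⟪e, v⟫ ^ 2 ≤ ‖v‖ ^ 2 := sq_le_sq.2 (by rwa [abs_norm])
  linarith [norm_sq_mul_norm_sq_eq_inner_sq_add e v]

lemma antilipschitzWith_domRestrict_orthogonalProjectionOnto {e : E} (he : 1 < ‖e‖) {A : Set E}
    (hA : ∀ x ∈ A, ∀ x' ∈ A, x' - x ∉ openCone e) :
    AntilipschitzWith (‖e‖ / √(‖e‖ ^ 2 - 1)).toNNReal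
      (A.domRestrict (ℝ ∙ e)ᗮ.orthogonalProjectionOnto) := by
  refine AntilipschitzWith.of_le_mul_dist fun x x' => ?_
  have hpos : 0 < √(‖e‖ ^ 2 - 1) := Real.sqrt_pos.2 (by nlinarith)
  have hchord : |⟪e, (x - x' : E)⟫| ≤ ‖(x - x' : E)‖ :=
    abs_inner_le_norm_of_notMem_openCone (hA x' x'.2 x x.2)
      (by simpa only [neg_sub] using hA x x.2 x' x'.2)
  rw [Real.coe_toNNReal _ (by positivity), div_mul_eq_mul_div, le_div_iff₀' hpos, Subtype.dist_eq,
    dist_eq_norm, dist_eq_norm, domRestrict_apply, domRestrict_apply, ← map_sub]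
  exact sqrt_mul_norm_le_of_abs_inner_le_norm hchord

lemma exists_isUpperAhlforsRegular_of_sub_notMem_openCone [FiniteDimensional ℝ E]
    [MeasurableSpace E] [BorelSpace E] {e : E} (he : 1 < ‖e‖) :
    ∃ C, ∀ A : Set E, (∀ x ∈ A, ∀ x' ∈ A, x' - x ∉ openCone e) →
      IsUpperAhlforsRegular ((μH[(finrank ℝ E : ℝ) - 1]).restrict A) C (finrank ℝ E - 1) := by
  have hdim : (finrank ℝ (ℝ ∙ e)ᗮ : ℝ) = finrank ℝ E - 1 := by
    rw [← (ℝ ∙ e).finrank_add_finrank_orthogonal,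
      finrank_span_singleton (norm_pos_iff.1 (zero_lt_one.trans he))]
    push_cast
    ring
  rw [← hdim]
  exact ⟨_, fun A hA => isUpperAhlforsRegular_hausdorffMeasure_restrict
    (antilipschitzWith_domRestrict_orthogonalProjectionOnto he hA)
    (ℝ ∙ e)ᗮ.lipschitzWith_orthogonalProjectionOnto one_ne_zero⟩

lemma exists_openCone_eventually_lt_of_hasStrictFDerivAt [CompleteSpace E] {f : E → ℝ}
    {f' : E →L[ℝ] ℝ} {p : E} (hf : HasStrictFDerivAt f f' p) (hf' : f' ≠ 0) :
    ∃ e : E, 1 < ‖e‖ ∧ ∀ᶠ x in 𝓝 (p, p), x.1 - x.2 ∈ openCone e → f x.1 < f x.2 := by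
  have hpos : 0 < ‖f'‖ := norm_pos_iff.2 hf'
  refine ⟨(InnerProductSpace.toDual ℝ E).symm (-(2 / ‖f'‖) • f'), ?_, ?_⟩
  · rw [LinearIsometryEquiv.norm_map, norm_smul, norm_neg, norm_div, norm_norm,
      div_mul_cancel₀ _ hpos.ne']
    norm_num
  filter_upwards [hf.isLittleO.def (half_pos hpos)] with x hx hcone
  have hdecr : f' (x.1 - x.2) < -(‖f'‖ / 2 * ‖x.1 - x.2‖) := by
    simp only [openCone, mem_ofPred_eq, InnerProductSpace.toDual_symm_apply,
      smul_apply, smul_eq_mul] at hcone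
    field_simp at hcone ⊢
    linarith
  linarith [(abs_le.1 hx).2]

end Cone

section TranslationStable

variable {G : Type*} [Sub G]

/-- Inside `U`, translating a point of `Ω` by a vector of `K` does not leave `Ω`. -/
def IsTranslationStable (Ω U K : Set G) : Prop :=
  ∀ q ∈ Ω ∩ U, ∀ q' ∈ U, q' - q ∈ K → q' ∈ Ω

lemma IsTranslationStable.mono {Ω U V K : Set G} (h : IsTranslationStable Ω V K) (hUV : U ⊆ V) :
    IsTranslationStable Ω U K :=
  fun q hq q' hq' => h q ⟨hq.1, hUV hq.2⟩ q' (hUV hq')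

lemma IsTranslationStable.mem_interior [TopologicalSpace G] [ContinuousSub G] {Ω U K : Set G}
    (h : IsTranslationStable Ω U K) (hU : IsOpen U) (hK : IsOpen K) {q q' : G}
    (hq : q ∈ closure Ω ∩ U) (hq' : q' ∈ U) (hK' : q' - q ∈ K) : q' ∈ interior Ω := by
  have hopen : IsOpen (U ∩ (fun w => q' - w) ⁻¹' K) := hU.inter (hK.preimage (by fun_prop))
  obtain ⟨w, ⟨hwU, hwK⟩, hwΩ⟩ := mem_closure_iff.1 hq.1 _ hopen ⟨hq.2, hK'⟩
  have hsub : U ∩ (fun w' => w' - w) ⁻¹' K ⊆ Ω := fun w' hw' => h w ⟨hwΩ, hwU⟩ w' hw'.1 hw'.2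
  exact interior_maximal hsub (hU.inter (hK.preimage (by fun_prop))) ⟨hq', hwK⟩

end TranslationStable

section InnerParallelSet

/-- The set `Σ_β` of the points of `Ω` at distance `β` from the boundary. When `frontier Ω` is
empty, `infDist` takes the junk value `0` and the set is empty for `β ≠ 0`. -/
def innerParallelSet {X : Type*} [PseudoMetricSpace X] (Ω : Set X) (β : ℝ) : Set X :=
  {x ∈ Ω | infDist x (frontier Ω) = β}

lemma frontier_nonempty_of_mem_innerParallelSet {X : Type*} [PseudoMetricSpace X] {Ω : Set X}
    {β : ℝ} {x : X} (hβ : β ≠ 0) (hx : x ∈ innerParallelSet Ω β) : (frontier Ω).Nonempty := by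
  by_contra! hempty
  exact hβ (by rw [← hx.2, hempty, infDist_empty])

lemma eventually_innerParallelSet_subset {X : Type*} [PseudoMetricSpace X] {Ω U : Set X}
    (hΩ : IsCompact (frontier Ω)) (hU : U ∈ 𝓝ˢ (frontier Ω)) :
    ∀ᶠ β in 𝓝[>] 0, innerParallelSet Ω β ⊆ U := by
  obtain ⟨ε, hε, hεU⟩ := (hasBasis_nhdsSet_thickening hΩ).mem_iff.1 hU
  filter_upwards [Ioo_mem_nhdsGT hε] with β hβ x hx
  refine hεU ((mem_thickening_iff_infDist_lt
    (frontier_nonempty_of_mem_innerParallelSet hβ.1.ne' hx)).2 ?_)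
  exact hx.2.trans_lt hβ.2

variable {E : Type*} [NormedAddCommGroup E] [NormedSpace ℝ E]

lemma ball_infDist_frontier_subset {Ω : Set E} {x : E} (hx : x ∈ Ω) :
    ball x (infDist x (frontier Ω)) ⊆ Ω := by
  set B := ball x (infDist x (frontier Ω))
  have hB : closure Ω ∩ B ⊆ interior Ω := fun z hz => by
    by_contra hzint
    exact disjoint_ball_infDist.notMem_of_mem_left hz.2 ⟨hz.1, hzint⟩
  obtain hempty | hne := B.eq_empty_or_nonempty
  · exact hempty ▸ empty_subset Ω
  have hxB : x ∈ B := mem_ball_self (nonempty_ball.1 hne)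
  have hBint : B ⊆ interior Ω :=
    (convex_ball x _).isPreconnected.subset_of_closure_inter_subset isOpen_interior
      ⟨x, hxB, hB ⟨subset_closure hx, hxB⟩⟩
      ((inter_subset_inter_left B (closure_mono interior_subset)).trans hB)
  exact hBint.trans interior_subset

lemma sub_notMem_of_mem_innerParallelSet [ProperSpace E] {Ω K : Set E} {p : E} {β ρ : ℝ}
    (hstable : IsTranslationStable Ω (ball p (2 * ρ)) K) (hK : IsOpen K) (hβ : β ∈ Ioo 0 ρ)
    {x x' : E} (hx : x ∈ innerParallelSet Ω β ∩ ball p ρ)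
    (hx' : x' ∈ innerParallelSet Ω β ∩ ball p ρ) : x' - x ∉ K := by
  intro hsub
  obtain ⟨z, hz, hzdist⟩ := isClosed_frontier.exists_infDist_eq_dist
    (frontier_nonempty_of_mem_innerParallelSet hβ.1.ne' hx.1) x'
  have hzx' : dist z x' = β := by rw [dist_comm, ← hzdist, hx'.1.2]
  set w := z - (x' - x)
  have hwx : dist w x = β := by rw [← hzx', dist_eq_norm, dist_eq_norm]; congr 1; module
  have hw : w ∈ closure Ω := by
    refine closure_mono (ball_infDist_frontier_subset hx.1.1) ?_
    rw [hx.1.2, closure_ball x hβ.1.ne']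
    exact hwx.le
  have mem_ball_two_mul {u v : E} (huv : dist u v = β) (hv : v ∈ ball p ρ) :
      u ∈ ball p (2 * ρ) := by
    rw [mem_ball] at *
    linarith [dist_triangle u v p, hβ.2]
  exact hz.2 (hstable.mem_interior isOpen_ball hK ⟨hw, mem_ball_two_mul hwx hx.2⟩
    (mem_ball_two_mul hzx' hx'.2) (by rwa [sub_sub_cancel]))

end InnerParallelSet

section LipschitzBoundary

variable {E : Type*} [NormedAddCommGroup E] [InnerProductSpace ℝ E]

/-- `Ω` has Lipschitz boundary, expressed by the local cone condition: near each boundary point, `Ω`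
is stable under translation by a nonempty open circular cone. For open `Ω` this means that `Ω` is
locally one side of the graph of a Lipschitz function. -/
def HasLipschitzBoundary (Ω : Set E) : Prop :=
  ∀ p ∈ frontier Ω, ∃ e : E, 1 < ‖e‖ ∧ ∃ U ∈ 𝓝 p, IsTranslationStable Ω U (openCone e)

lemma HasC2Boundary.hasLipschitzBoundary {N : ℕ} {Ω : Set (EuclideanSpace ℝ (Fin N))}
    (hΩ : HasC2Boundary Ω) : HasLipschitzBoundary Ω := by
  intro p hp
  obtain ⟨U, f, hUo, hpU, hf, hf', hΩU⟩ := hΩ p hp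
  have hU : U ∈ 𝓝 p := hUo.mem_nhds hpU
  have hstrict : HasStrictFDerivAt f (fderiv ℝ f p) p :=
    (hf.contDiffAt hU).hasStrictFDerivAt two_ne_zero
  obtain ⟨e, he, hcone⟩ := exists_openCone_eventually_lt_of_hasStrictFDerivAt hstrict (hf' p hpU)
  rw [nhds_prod_eq] at hcone
  obtain ⟨W, hW, hWcone⟩ := eventually_prod_self_iff'.1 hcone
  refine ⟨e, he, W ∩ U, inter_mem hW hU, fun q hq q' hq' hsub => ?_⟩
  have hfq : f q < 0 := (hΩU.subset ⟨hq.1, hq.2.2⟩).2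
  have hfq' : f q' < f q := hWcone q' hq'.1 q hq.2.1 hsub
  exact (hΩU.superset ⟨hq'.2, hfq'.trans hfq⟩).1

variable [FiniteDimensional ℝ E] [MeasurableSpace E] [BorelSpace E] {Ω : Set E}

lemma HasLipschitzBoundary.exists_isUpperAhlforsRegular_innerParallelSet_inter
    (hΩ : HasLipschitzBoundary Ω) {p : E} (hp : p ∈ frontier Ω) :
    ∃ U ∈ 𝓝 p, ∃ C, ∀ᶠ β in 𝓝[>] 0, IsUpperAhlforsRegular
      ((μH[(finrank ℝ E : ℝ) - 1]).restrict (innerParallelSet Ω β ∩ U)) C (finrank ℝ E - 1) := by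
  obtain ⟨e, he, U, hU, hstable⟩ := hΩ p hp
  obtain ⟨R, hR, hRU⟩ := Metric.mem_nhds_iff.1 hU
  obtain ⟨C, hC⟩ := exists_isUpperAhlforsRegular_of_sub_notMem_openCone he
  refine ⟨ball p (R / 2), ball_mem_nhds p (half_pos hR), C, ?_⟩
  filter_upwards [Ioo_mem_nhdsGT (half_pos hR)] with β hβ
  refine hC _ fun x hx x' hx' => ?_
  exact sub_notMem_of_mem_innerParallelSet
    (hstable.mono (by rwa [mul_div_cancel₀ R two_ne_zero])) (isOpen_openCone e) hβ hx hx'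

lemma HasLipschitzBoundary.exists_isUpperAhlforsRegular_innerParallelSet
    (hΩ : HasLipschitzBoundary Ω) (hΩc : IsCompact (frontier Ω)) :
    ∃ C, ∀ᶠ β in 𝓝[>] 0, IsUpperAhlforsRegular
      ((μH[(finrank ℝ E : ℝ) - 1]).restrict (innerParallelSet Ω β)) C (finrank ℝ E - 1) := by
  obtain ⟨U, hU, C, hC⟩ := exists_isUpperAhlforsRegular_restrict_of_isCompact hΩc fun p hp =>
    hΩ.exists_isUpperAhlforsRegular_innerParallelSet_inter hp
  refine ⟨C, ?_⟩
  filter_upwards [hC, eventually_innerParallelSet_subset hΩc hU] with β hβ hsub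
  rwa [inter_eq_left.2 hsub] at hβ

theorem stmt15_general [Nontrivial E] (hΩc : IsCompact (frontier Ω)) (hΩ : HasLipschitzBoundary Ω)
    {a α : ℝ} (ha : 0 < a) (hα : 1 / 2 < α) :
    ∃ c : ℝ, 0 < c ∧ ∃ β₀ : ℝ, 0 < β₀ ∧ ∀ β ∈ Ioo 0 β₀, ∀ y : E,
      (∫⁻ x in innerParallelSet Ω β ∩ {x | a * β ≤ dist x y},
        ENNReal.ofReal (dist x y ^ ((2 : ℝ) - finrank ℝ E - 2 * α)) ∂(μH[(finrank ℝ E : ℝ) - 1])) ≤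
      ENNReal.ofReal (c * β ^ (1 - 2 * α)) := by
  obtain ⟨C, hC⟩ := hΩ.exists_isUpperAhlforsRegular_innerParallelSet hΩc
  obtain ⟨β₀, hβ₀, hreg⟩ := mem_nhdsGT_iff_exists_Ioo_subset.1 hC
  have hdim : (1 : ℝ) ≤ finrank ℝ E := Nat.one_le_cast.2 finrank_pos
  set d : ℝ := finrank ℝ E - 1
  set s : ℝ := finrank ℝ E - 2 + 2 * α
  set c : ℝ := C * 2 ^ d * (1 - 2 ^ (d - s))⁻¹ * a ^ (d - s)
  refine ⟨max c 1, lt_max_of_lt_right one_pos, β₀, hβ₀, fun β hβ y => ?_⟩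
  have hβ0 : 0 < β := hβ.1
  have hdecay := (hreg hβ).setLIntegral_compl_ball_le (s := s) (by linarith) (by linarith) y
    (mul_pos ha hβ0)
  have hcompl : (ball y (a * β))ᶜ = {x | a * β ≤ dist x y} := by
    ext x
    simp only [mem_compl_iff, mem_ball, not_lt, mem_ofPred_eq]
  rw [Measure.restrict_restrict measurableSet_ball.compl, inter_comm, hcompl,
    Real.mul_rpow ha.le hβ0.le, ← mul_assoc] at hdecay
  rw [show 1 - 2 * α = d - s by ring, show 2 - (finrank ℝ E : ℝ) - 2 * α = -s by ring]
  refine hdecay.trans (ENNReal.ofReal_le_ofReal ?_)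
  gcongr
  exact le_max_left c 1

end LipschitzBoundary

theorem stmt15 {N : ℕ} (hN : 3 ≤ N) (Ω : Set (EuclideanSpace ℝ (Fin N)))
    (hΩo : IsOpen Ω) (hΩb : Bornology.IsBounded Ω) (hΩ2 : HasC2Boundary Ω)
    (a α : ℝ) (ha : 1 ≤ a) (hα : 1/2 < α) :
    ∃ c : ℝ, 0 < c ∧ ∃ β₀ : ℝ, 0 < β₀ ∧
      ∀ β ∈ Set.Ioo (0:ℝ) β₀, ∀ y : EuclideanSpace ℝ (Fin N),
        (∫⁻ x in {x ∈ Ω | Metric.infDist x (frontier Ω) = β} ∩ {x | a * β ≤ dist x y},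
          ENNReal.ofReal (dist x y ^ ((2:ℝ) - N - 2 * α)) ∂(μH[(N:ℝ) - 1])) ≤
        ENNReal.ofReal (c * β ^ (1 - 2 * α)) := by
  have : Nonempty (Fin N) := ⟨0, by omega⟩
  simpa only [finrank_euclideanSpace_fin, innerParallelSet] using stmt15_general
    (isCompact_of_isClosed_isBounded isClosed_frontier (hΩb.closure.subset frontier_subset_closure))
    hΩ2.hasLipschitzBoundary (zero_lt_one.trans_le ha) hα
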